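/- With notation as above, for any q ∈ {1,…,M}, the Shapovalov form S = S^{(M)} = Σ_{1≤i₁<…<i_M≤r} Π_{s=1}^M a_{i_s} dlog f_{i_s}^{(1)} ∧ dlog f_{i_s}^{(2)} satisfies S = (η^{(1)} − η^{(2)}) ∧ S^{(M−1)} ∧ dlog(F_q^{(1)} − F_q^{(2)}). In particular, S is exact in the Aomoto complex (with differential ω ↦ (η^{(1)}−η^{(2)})∧ω) on the open set where F_q^{(1)} − F_q^{(2)} is invertible. -/

import Mathlib

set_option synthInstance.maxHeartbeats 1000000
set_option maxHeartbeats 1000000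

noncomputable section

open ExteriorAlgebra

/-- Points of `W × W`, where `W = ℂ^M`. -/
abbrev Pt (M : ℕ) := (Fin M → ℂ) × (Fin M → ℂ)

/-- The dual space of `W × W`; constant-coefficient 1-forms live here. -/
abbrev Cov (M : ℕ) := Pt M →ₗ[ℂ] ℂ

/-- Algebraic differential forms on (an open subset of) `W × W`, described by their
value at each point as an element of the exterior algebra of the dual space. -/
abbrev Forms (M : ℕ) := ExteriorAlgebra ℂ (Cov M)

variable (M r : ℕ)

/-- `dlog f_i^{(1)}` at the point `p`, where `f_i` is the degree one polynomial with
linear part `ℓ i` and constant term `c i`, pulled back via the first projection. -/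
def dlog1 (ℓ : Fin r → ((Fin M → ℂ) →ₗ[ℂ] ℂ)) (c : Fin r → ℂ) (i : Fin r)
    (p : Pt M) : Forms M :=
  (ℓ i p.1 + c i)⁻¹ • ι ℂ ((ℓ i).comp (LinearMap.fst ℂ (Fin M → ℂ) (Fin M → ℂ)))

/-- `dlog f_i^{(2)}` at the point `p` (pullback via the second projection). -/
def dlog2 (ℓ : Fin r → ((Fin M → ℂ) →ₗ[ℂ] ℂ)) (c : Fin r → ℂ) (i : Fin r)
    (p : Pt M) : Forms M :=
  (ℓ i p.2 + c i)⁻¹ • ι ℂ ((ℓ i).comp (LinearMap.snd ℂ (Fin M → ℂ) (Fin M → ℂ)))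

/-- `dlog (F_q^{(1)} − F_q^{(2)})` at the point `p`, for linear forms `F q` on `W`. -/
def dlogH (F : Fin M → ((Fin M → ℂ) →ₗ[ℂ] ℂ)) (q : Fin M) (p : Pt M) : Forms M :=
  (F q p.1 - F q p.2)⁻¹ •
    ι ℂ ((F q).comp (LinearMap.fst ℂ (Fin M → ℂ) (Fin M → ℂ))
          - (F q).comp (LinearMap.snd ℂ (Fin M → ℂ) (Fin M → ℂ)))

/-- `S^{(b)} = Σ_{i₁<…<i_b} Π_s a_{i_s} dlog f_{i_s}^{(1)} ∧ dlog f_{i_s}^{(2)}`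
at the point `p`. -/
def Sb (ℓ : Fin r → ((Fin M → ℂ) →ₗ[ℂ] ℂ)) (c : Fin r → ℂ) (a : Fin r → ℂ)
    (b : ℕ) (p : Pt M) : Forms M :=
  ∑ s ∈ Finset.powersetCard b (Finset.univ : Finset (Fin r)),
    (∏ i ∈ s, a i) •
      ((s.sort (· ≤ ·)).map (fun i => dlog1 M r ℓ c i p * dlog2 M r ℓ c i p)).prod

/-- `η^{(1)} = Σ_i a_i dlog f_i^{(1)}` at the point `p`. -/
def eta1 (ℓ : Fin r → ((Fin M → ℂ) →ₗ[ℂ] ℂ)) (c : Fin r → ℂ) (a : Fin r → ℂ)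
    (p : Pt M) : Forms M :=
  ∑ i : Fin r, a i • dlog1 M r ℓ c i p

/-- `η^{(2)} = Σ_i a_i dlog f_i^{(2)}` at the point `p`. -/
def eta2 (ℓ : Fin r → ((Fin M → ℂ) →ₗ[ℂ] ℂ)) (c : Fin r → ℂ) (a : Fin r → ℂ)
    (p : Pt M) : Forms M :=
  ∑ i : Fin r, a i • dlog2 M r ℓ c i p


section Helpers

variable {E : Type*} [AddCommGroup E] [Module ℂ E]

lemma anticomm_aux (x y : E) : ι ℂ x * ι ℂ y = - (ι ℂ y * ι ℂ x) := by
  have := ExteriorAlgebra.ι_add_mul_swap (R := ℂ) x y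
  exact eq_neg_of_add_eq_zero_left this

lemma central_aux (x y : E) :
    ι ℂ x * ι ℂ y ∈ Subalgebra.center ℂ (ExteriorAlgebra ℂ E) := by
  rw [Subalgebra.mem_center_iff]
  intro b
  induction b using ExteriorAlgebra.induction with
  | algebraMap t => exact Algebra.commutes t _
  | ι z =>
    rw [← mul_assoc, anticomm_aux z x, neg_mul, mul_assoc, anticomm_aux z y, mul_neg, neg_neg,
      mul_assoc]
  | mul s t hs ht => rw [mul_assoc, ht, ← mul_assoc, hs, mul_assoc]
  | add s t hs ht => rw [add_mul, mul_add, hs, ht]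

variable {V : Type*} [AddCommGroup V] [Module ℂ V]

/-- The weighted even element as an element of the center. -/
def wc {r : ℕ} (e1 e2 : V →ₗ[ℂ] E) (ℓ : Fin r → V) (κ : Fin r → ℂ) (i : Fin r) :
    Subalgebra.center ℂ (ExteriorAlgebra ℂ E) :=
  κ i • ⟨ι ℂ (e1 (ℓ i)) * ι ℂ (e2 (ℓ i)), central_aux _ _⟩

/-- The product of the even elements over a finite set. -/
def PP {r : ℕ} (e1 e2 : V →ₗ[ℂ] E) (ℓ : Fin r → V) (κ : Fin r → ℂ) (s : Finset (Fin r)) :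
    ExteriorAlgebra ℂ E :=
  ((∏ i ∈ s, wc e1 e2 ℓ κ i : Subalgebra.center ℂ (ExteriorAlgebra ℂ E)) : ExteriorAlgebra ℂ E)

variable {r : ℕ} (e1 e2 : V →ₗ[ℂ] E) (ℓ : Fin r → V) (κ : Fin r → ℂ)

lemma PP_comm (s : Finset (Fin r)) (b : ExteriorAlgebra ℂ E) :
    PP e1 e2 ℓ κ s * b = b * PP e1 e2 ℓ κ s :=
  ((Subalgebra.mem_center_iff.1 (∏ i ∈ s, wc e1 e2 ℓ κ i).2) b).symm

lemma PP_erase {s : Finset (Fin r)} {i : Fin r} (hi : i ∈ s) :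
    PP e1 e2 ℓ κ s
      = κ i • (ι ℂ (e1 (ℓ i)) * ι ℂ (e2 (ℓ i)) * PP e1 e2 ℓ κ (s.erase i)) := by
  unfold PP
  rw [← Finset.mul_prod_erase s _ hi]
  simp [wc]

lemma u_PP {s : Finset (Fin r)} {i : Fin r} (hi : i ∈ s) :
    ι ℂ (e1 (ℓ i)) * PP e1 e2 ℓ κ s = 0 := by
  rw [PP_erase e1 e2 ℓ κ hi, mul_smul_comm, ← mul_assoc, ← mul_assoc, ι_sq_zero]
  simp

lemma v_PP {s : Finset (Fin r)} {i : Fin r} (hi : i ∈ s) :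
    ι ℂ (e2 (ℓ i)) * PP e1 e2 ℓ κ s = 0 := by
  rw [PP_erase e1 e2 ℓ κ hi, mul_smul_comm, ← mul_assoc, anticomm_aux (e1 (ℓ i)), mul_neg,
    ← mul_assoc, ι_sq_zero]
  simp

/-- a linear combination over `K` times the product over `K \ i` -/
lemma comb_PP (e : V →ₗ[ℂ] E)
    (he : ∀ (s : Finset (Fin r)) (i : Fin r), i ∈ s → ι ℂ (e (ℓ i)) * PP e1 e2 ℓ κ s = 0)
    (K : Finset (Fin r)) (c : Fin r → ℂ) {i : Fin r} (hi : i ∈ K) :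
    ι ℂ (e (∑ j ∈ K, c j • ℓ j)) * PP e1 e2 ℓ κ (K.erase i)
      = c i • (ι ℂ (e (ℓ i)) * PP e1 e2 ℓ κ (K.erase i)) := by
  simp only [map_sum, map_smul, Finset.sum_mul, smul_mul_assoc]
  rw [Finset.sum_eq_single_of_mem i hi]
  intro j hj hji
  rw [he _ _ (Finset.mem_erase.2 ⟨hji, hj⟩), smul_zero]

/-- vanishing in the dependent case -/
lemma dep_PP (e : V →ₗ[ℂ] E)
    (he : ∀ (s : Finset (Fin r)) (i : Fin r), i ∈ s → ι ℂ (e (ℓ i)) * PP e1 e2 ℓ κ s = 0)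
    (hsub : ∀ (s : Finset (Fin r)) (k : Fin r), k ∈ s → ∃ b, PP e1 e2 ℓ κ s
        = ι ℂ (e (ℓ k)) * PP e1 e2 ℓ κ (s.erase k) * b)
    (K : Finset (Fin r)) (c : Fin r → ℂ) {k : Fin r} (hk : k ∈ K)
    (hc : ℓ k = ∑ j ∈ K.erase k, c j • ℓ j) {i : Fin r} (hi : i ∈ K) :
    ι ℂ (e (ℓ i)) * PP e1 e2 ℓ κ (K.erase i) = 0 := by
  by_cases hik : i = k
  · subst hik
    conv_lhs => rw [hc]
    simp only [map_sum, map_smul, Finset.sum_mul, smul_mul_assoc]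
    exact Finset.sum_eq_zero fun j hj => by rw [he _ _ hj, smul_zero]
  · obtain ⟨b, hb⟩ := hsub (K.erase i) k (Finset.mem_erase.2 ⟨Ne.symm hik, hk⟩)
    have hiK : i ∈ K.erase k := Finset.mem_erase.2 ⟨hik, hi⟩
    rw [hb, hc, Finset.erase_right_comm, comb_PP e1 e2 ℓ κ e he _ c hiK, smul_mul_assoc,
      mul_smul_comm, ← mul_assoc, ← mul_assoc, ι_sq_zero]
    simp

lemma span_aux (K : Finset (Fin r)) (x : V)
    (hx : x ∈ Submodule.span ℂ (ℓ '' (K : Set (Fin r)))) :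
    ∃ c : Fin r → ℂ, ∑ j ∈ K, c j • ℓ j = x := by
  obtain ⟨c, hc⟩ := (Submodule.mem_span_image_finset_iff_exists_fun ℂ).1 hx
  refine ⟨fun j => if h : j ∈ K then c ⟨j, h⟩ else 0, ?_⟩
  rw [← hc, ← Finset.sum_coe_sort K]
  refine Finset.sum_congr rfl fun j _ => ?_
  simp

lemma key_PP [FiniteDimensional ℂ V] (A B a : Fin r → ℂ)
    (hA : ∀ i, A i ≠ 0) (hB : ∀ i, B i ≠ 0) (F : V) (ev : V →ₗ[ℂ] ℂ) (hF : ev F ≠ 0)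
    (hev : ∀ i, ev (ℓ i) = A i - B i) (hκ : ∀ i, κ i = a i * ((A i)⁻¹ * (B i)⁻¹))
    (K : Finset (Fin r)) (hK : K.card = Module.finrank ℂ V) :
    ∑ i ∈ K, (a i • ((A i)⁻¹ • ι ℂ (e1 (ℓ i)) - (B i)⁻¹ • ι ℂ (e2 (ℓ i)))) *
      (PP e1 e2 ℓ κ (K.erase i) * ((ev F)⁻¹ • ι ℂ (e1 F - e2 F))) = PP e1 e2 ℓ κ K := by
  have hu := fun s i (hi : i ∈ s) => u_PP e1 e2 ℓ κ hi
  have hv := fun s i (hi : i ∈ s) => v_PP e1 e2 ℓ κ hi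
  by_cases hli : LinearIndepOn ℂ ℓ (K : Set (Fin r))
  · have hspan : F ∈ Submodule.span ℂ (ℓ '' (K : Set (Fin r))) := by
      have h := LinearIndependent.span_eq_top_of_card_eq_finrank' (K := ℂ) hli (by simpa using hK)
      have h2 : Set.range (fun x : (K : Set (Fin r)) => ℓ x) = ℓ '' (K : Set (Fin r)) := by
        ext; simp
      rw [← h2, h]; trivial
    obtain ⟨c, hc⟩ := span_aux ℓ K F hspan
    have hterm : ∀ i ∈ K, (a i • ((A i)⁻¹ • ι ℂ (e1 (ℓ i)) - (B i)⁻¹ • ι ℂ (e2 (ℓ i)))) *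
      (PP e1 e2 ℓ κ (K.erase i) * ((ev F)⁻¹ • ι ℂ (e1 F - e2 F)))
        = ((ev F)⁻¹ * (c i * ev (ℓ i))) • PP e1 e2 ℓ κ K := by
      intro i hi
      have e1F : ι ℂ (e1 F) * PP e1 e2 ℓ κ (K.erase i)
        = c i • (ι ℂ (e1 (ℓ i)) * PP e1 e2 ℓ κ (K.erase i)) := by
        rw [← hc]; exact comb_PP e1 e2 ℓ κ e1 hu K c hi
      have e2F : ι ℂ (e2 F) * PP e1 e2 ℓ κ (K.erase i)
        = c i • (ι ℂ (e2 (ℓ i)) * PP e1 e2 ℓ κ (K.erase i)) := by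
        rw [← hc]; exact comb_PP e1 e2 ℓ κ e2 hv K c hi
      rw [PP_comm, PP_erase e1 e2 ℓ κ hi, smul_mul_assoc (ev F)⁻¹, map_sub,
        sub_mul (ι ℂ (e1 F)), e1F, e2F, hev, hκ]
      simp only [smul_mul_assoc, mul_smul_comm, sub_mul, mul_sub, ← mul_assoc, ι_sq_zero,
        smul_sub, smul_smul, anticomm_aux (e2 (ℓ i)) (e1 (ℓ i)), neg_mul, zero_mul, smul_zero,
        smul_neg]
      have := hA i
      have := hB i
      match_scalars
      field_simp
    rw [Finset.sum_congr rfl hterm, ← Finset.sum_smul, ← Finset.mul_sum]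
    have : ∑ i ∈ K, c i * ev (ℓ i) = ev F := by rw [← hc]; simp
    rw [this, inv_mul_cancel₀ hF, one_smul]
  · rw [linearIndepOn_iff_notMem_span] at hli
    push Not at hli
    obtain ⟨k, hk, hmem⟩ := hli
    have hk' : k ∈ K := hk
    rw [← Finset.coe_erase] at hmem
    obtain ⟨c, hc⟩ := span_aux ℓ _ _ hmem
    have hu0 : ∀ i ∈ K, ι ℂ (e1 (ℓ i)) * PP e1 e2 ℓ κ (K.erase i) = 0 := fun i hi => by
      refine dep_PP e1 e2 ℓ κ e1 hu ?_ K c hk' hc.symm hi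
      intro s k hk
      refine ⟨κ k • ι ℂ (e2 (ℓ k)), ?_⟩
      rw [PP_erase e1 e2 ℓ κ hk, mul_smul_comm, mul_assoc, mul_assoc, PP_comm]
    have hv0 : ∀ i ∈ K, ι ℂ (e2 (ℓ i)) * PP e1 e2 ℓ κ (K.erase i) = 0 := fun i hi => by
      refine dep_PP e1 e2 ℓ κ e2 hv ?_ K c hk' hc.symm hi
      intro s k hk
      refine ⟨- (κ k • ι ℂ (e1 (ℓ k))), ?_⟩
      rw [PP_erase e1 e2 ℓ κ hk, mul_neg, mul_smul_comm, anticomm_aux, neg_mul, mul_assoc,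
        mul_assoc, PP_comm, smul_neg]
    rw [PP_erase e1 e2 ℓ κ hk', mul_assoc, hv0 k hk', mul_zero, smul_zero]
    refine Finset.sum_eq_zero fun i hi => ?_
    rw [← mul_assoc, smul_mul_assoc, sub_mul, smul_mul_assoc (A i)⁻¹,
      smul_mul_assoc (B i)⁻¹, hu0 i hi, hv0 i hi]
    simp

lemma sum_reindex {A : Type*} [AddCommMonoid A] (m : ℕ) (g : Fin r → Finset (Fin r) → A)
    (hg : ∀ i s, i ∈ s → g i s = 0) :
    ∑ s ∈ Finset.powersetCard m (Finset.univ : Finset (Fin r)), ∑ i, g i s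
      = ∑ K ∈ Finset.powersetCard (m + 1) (Finset.univ : Finset (Fin r)),
          ∑ i ∈ K, g i (K.erase i) := by
  have : ∀ s : Finset (Fin r), ∑ i, g i s = ∑ i ∈ sᶜ, g i s := fun s => by
    symm
    apply Finset.sum_subset (Finset.subset_univ _)
    intro i _ hi
    exact hg i s (by simpa using hi)
  simp only [this]
  rw [Finset.sum_sigma', Finset.sum_sigma']
  refine Finset.sum_bij' (fun x _ => ⟨insert x.2 x.1, x.2⟩) (fun x _ => ⟨x.1.erase x.2, x.2⟩)
    ?_ ?_ ?_ ?_ ?_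
  · rintro ⟨s, i⟩ h
    simp only [Finset.mem_sigma, Finset.mem_powersetCard_univ, Finset.mem_compl] at h ⊢
    simp [h.1, h.2]
  · rintro ⟨s, i⟩ h
    simp only [Finset.mem_sigma, Finset.mem_powersetCard_univ, Finset.mem_compl] at h ⊢
    simp [h.1, h.2]
  · rintro ⟨s, i⟩ h
    simp only [Finset.mem_sigma, Finset.mem_powersetCard_univ, Finset.mem_compl] at h ⊢
    simp [h.2]
  · rintro ⟨s, i⟩ h
    simp only [Finset.mem_sigma, Finset.mem_powersetCard_univ] at h ⊢
    simp [h.2]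
  · rintro ⟨s, i⟩ h
    simp only [Finset.mem_sigma, Finset.mem_powersetCard_univ, Finset.mem_compl] at h ⊢
    simp [h.2]

end Helpers

/-- Pullback of linear forms along the first projection. -/
def pb1 : ((Fin M → ℂ) →ₗ[ℂ] ℂ) →ₗ[ℂ] Cov M :=
  LinearMap.lcomp ℂ ℂ (LinearMap.fst ℂ (Fin M → ℂ) (Fin M → ℂ))

/-- Pullback of linear forms along the second projection. -/
def pb2 : ((Fin M → ℂ) →ₗ[ℂ] ℂ) →ₗ[ℂ] Cov M :=
  LinearMap.lcomp ℂ ℂ (LinearMap.snd ℂ (Fin M → ℂ) (Fin M → ℂ))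

lemma Sb_eq (ℓ : Fin r → ((Fin M → ℂ) →ₗ[ℂ] ℂ)) (c : Fin r → ℂ) (a : Fin r → ℂ)
    (b : ℕ) (p : Pt M) :
    Sb M r ℓ c a b p = ∑ s ∈ Finset.powersetCard b (Finset.univ : Finset (Fin r)),
      PP (pb1 M) (pb2 M) ℓ (fun i => a i * ((ℓ i p.1 + c i)⁻¹ * (ℓ i p.2 + c i)⁻¹)) s := by
  unfold Sb
  refine Finset.sum_congr rfl fun s _ => ?_
  have h : ∀ i, dlog1 M r ℓ c i p * dlog2 M r ℓ c i p =
      ((wc (pb1 M) (pb2 M) ℓ (fun i => (ℓ i p.1 + c i)⁻¹ * (ℓ i p.2 + c i)⁻¹) i :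
        Subalgebra.center ℂ (Forms M)) : Forms M) := by
    intro i
    simp only [dlog1, dlog2, wc, smul_mul_assoc, mul_smul_comm, smul_smul]
    rw [mul_comm]
    rfl
  have h2 : ∀ i, wc (pb1 M) (pb2 M) ℓ
      (fun i => a i * ((ℓ i p.1 + c i)⁻¹ * (ℓ i p.2 + c i)⁻¹)) i
      = a i • wc (pb1 M) (pb2 M) ℓ (fun i => (ℓ i p.1 + c i)⁻¹ * (ℓ i p.2 + c i)⁻¹) i := by
    intro i
    simp only [wc, smul_smul]
  simp only [h, PP, h2]
  rw [Finset.prod_smul, SetLike.val_smul, Finset.prod_eq_multiset_prod,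
    Finset.prod_eq_multiset_prod]
  congr 1
  conv_rhs => rw [← Finset.sort_eq s (· ≤ ·)]
  rw [Multiset.map_coe, Multiset.prod_coe]
  rw [← Subalgebra.coe_val, map_list_prod, List.map_map]
  rfl

/-- **Corollary `grundlegendSpeciale`.** For any `q ∈ {1,…,M}`, the
Shapovalov form `S = S^{(M)}` satisfies
`S = (η^{(1)} − η^{(2)}) ∧ S^{(M−1)} ∧ dlog(F_q^{(1)} − F_q^{(2)})` on the open set
where `F_q^{(1)} − F_q^{(2)}` (and all the `f_i^{(1)}, f_i^{(2)}`) are invertible.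
In particular `S` is exact in the Aomoto complex with differential
`ω ↦ (η^{(1)} − η^{(2)}) ∧ ω` there. -/
theorem shapovalov_form_exact
    (ℓ : Fin r → ((Fin M → ℂ) →ₗ[ℂ] ℂ)) (c : Fin r → ℂ) (a : Fin r → ℂ)
    (F : Fin M → ((Fin M → ℂ) →ₗ[ℂ] ℂ)) (q : Fin M)
    (p : Pt M)
    (h1 : ∀ i, ℓ i p.1 + c i ≠ 0) (h2 : ∀ i, ℓ i p.2 + c i ≠ 0)
    (h3 : F q p.1 ≠ F q p.2) :
    Sb M r ℓ c a M p
      = (eta1 M r ℓ c a p - eta2 M r ℓ c a p) *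
          (Sb M r ℓ c a (M - 1) p * dlogH M F q p)
    ∧ ∃ ω : Forms M,
        Sb M r ℓ c a M p = (eta1 M r ℓ c a p - eta2 M r ℓ c a p) * ω := by
  have key : Sb M r ℓ c a M p
      = (eta1 M r ℓ c a p - eta2 M r ℓ c a p) *
          (Sb M r ℓ c a (M - 1) p * dlogH M F q p) := by
    have hm : M = (M - 1) + 1 := by have := q.2; omega
    rw [Sb_eq, Sb_eq]
    set κ : Fin r → ℂ := fun i => a i * ((ℓ i p.1 + c i)⁻¹ * (ℓ i p.2 + c i)⁻¹) with hκ
    have hH : dlogH M F q p = (F q p.1 - F q p.2)⁻¹ • ι ℂ (pb1 M (F q) - pb2 M (F q)) := rfl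
    have heta : eta1 M r ℓ c a p - eta2 M r ℓ c a p
        = ∑ i, a i • ((ℓ i p.1 + c i)⁻¹ • ι ℂ (pb1 M (ℓ i))
            - (ℓ i p.2 + c i)⁻¹ • ι ℂ (pb2 M (ℓ i))) := by
      simp only [smul_sub, Finset.sum_sub_distrib]
      rfl
    let ev : ((Fin M → ℂ) →ₗ[ℂ] ℂ) →ₗ[ℂ] ℂ := LinearMap.applyₗ (p.1 - p.2)
    have hev : ∀ φ, ev φ = φ p.1 - φ p.2 := fun φ => by simp [ev]
    have hfr : Module.finrank ℂ ((Fin M → ℂ) →ₗ[ℂ] ℂ) = M := by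
      simp [Module.finrank_linearMap]
    rw [heta, hH, ← hev, Finset.sum_mul]
    simp only [Finset.sum_mul, Finset.mul_sum]
    rw [Finset.sum_comm]
    rw [sum_reindex (M - 1) (fun i s => (a i • ((ℓ i p.1 + c i)⁻¹ • ι ℂ (pb1 M (ℓ i))
            - (ℓ i p.2 + c i)⁻¹ • ι ℂ (pb2 M (ℓ i)))) *
          (PP (pb1 M) (pb2 M) ℓ κ s * ((ev (F q))⁻¹ • ι ℂ (pb1 M (F q) - pb2 M (F q)))))]
    · rw [← hm]
      refine Finset.sum_congr rfl fun K hK => ?_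
      symm
      refine key_PP (pb1 M) (pb2 M) ℓ κ (fun i => ℓ i p.1 + c i) (fun i => ℓ i p.2 + c i) a
        h1 h2 (F q) ev ?_ ?_ (fun i => rfl) K ?_
      · rw [hev]; exact sub_ne_zero.2 h3
      · intro i; rw [hev]; ring
      · rw [hfr]; exact (Finset.mem_powersetCard.1 hK).2
    · intro i s hi
      rw [← mul_assoc, smul_mul_assoc, sub_mul, smul_mul_assoc (ℓ i p.1 + c i)⁻¹,
        smul_mul_assoc (ℓ i p.2 + c i)⁻¹, u_PP _ _ _ _ hi, v_PP _ _ _ _ hi]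
      simp
  exact ⟨key, _, key⟩
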